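/- arXiv:1707.06369 — 2 statements merged into one kernel-verified Lean document; each statement's English description precedes it below -/
import Mathlib

section
/- For all natural numbers a, b, k one has ((2a+1)/6) · C(a+b+1/2, b) · ∫_1^4 ((s−1)/3)^{(2a−1)/2} · ((4−s)/3)^b · s^k ds = ∑_{r=0}^k 4^r · C(−(2a+1)/2, r) · C(−(b+1), k−r) / C(−(2a+2b+3)/2, k). In particular (the case k = 0), the density s ↦ ((2a+1)/6) · C(a+b+1/2, b) · ((s−1)/3)^{(2a−1)/2} ((4−s)/3)^b on [1,4] is a probability density. -/
/-! The affine coordinate `u = (s - 1) / 3` maps `[1, 4]` to `[0, 1]`, with `(4 - s) / 3 = 1 - u` and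
`s = 4 * u + (1 - u)`. Expanding `s ^ k` by the binomial theorem turns the moment into a sum over
`r ≤ k` of beta integrals
`∫ u in 0..1, u ^ (a + r - 1 / 2) * (1 - u) ^ (b + k - r)`.
The second exponent is a natural number, so each of them is a factorial divided by a rising
factorial (`integral_rpow_mul_one_sub_pow`). The two sides of the claim then agree term by term in
`r`: after all generalized binomial coefficients are rewritten with rising factorials `(x)_n`
(`genBinom_neg`, `genBinom_add_sub_one`), what remains is the splitting
`(p)_r * (p + r)_(b + k - r + 1) = (p)_(b + k + 1) = p * (p + 1)_b * (p + b + 1)_k`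
for `p = a + 1 / 2` (`term_identity`).
-/

/-- The falling factorial `[x]_s = x(x−1)⋯(x−s+1)`. -/
noncomputable def fall (x : ℝ) (s : ℕ) : ℝ := ∏ j ∈ Finset.range s, (x - (j : ℝ))

/-- The generalized binomial coefficient `C(x,s) = [x]_s / s!`. -/
noncomputable def genBinom (x : ℝ) (s : ℕ) : ℝ := fall x s / (Nat.factorial s : ℝ)

/-- The rising factorial `(x)_n = x (x + 1) ⋯ (x + n - 1)`. -/
noncomputable def rising (x : ℝ) (n : ℕ) : ℝ := ∏ j ∈ Finset.range n, (x + (j : ℝ))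

theorem rising_add (x : ℝ) (m n : ℕ) :
    rising x (m + n) = rising x m * rising (x + m) n := by
  simp only [rising, Finset.prod_range_add]
  congr 1
  refine Finset.prod_congr rfl fun j _ => ?_
  push_cast
  ring

theorem rising_one (x : ℝ) : rising x 1 = x := by
  simp [rising]

theorem rising_pos {x : ℝ} (hx : 0 < x) (n : ℕ) : 0 < rising x n :=
  Finset.prod_pos fun j _ => by positivity

theorem factorial_add_eq_rising (b m : ℕ) :
    ((b + m).factorial : ℝ) = b.factorial * rising ((b : ℝ) + 1) m := by
  induction m with
  | zero => simp [rising]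
  | succ m ih =>
    rw [← add_assoc, Nat.factorial_succ, rising_add, rising_one]
    push_cast
    rw [ih]
    ring

theorem genBinom_neg (x : ℝ) (n : ℕ) :
    genBinom (-x) n = (-1) ^ n * rising x n / n.factorial := by
  have h : fall (-x) n = (-1) ^ n * rising x n := by
    unfold fall rising
    rw [← Finset.card_range n, ← Finset.prod_const, Finset.card_range, ← Finset.prod_mul_distrib]
    exact Finset.prod_congr rfl fun j _ => by ring
  rw [genBinom, h]

theorem genBinom_add_sub_one (x : ℝ) (n : ℕ) :
    genBinom (x + n - 1) n = rising x n / n.factorial := by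
  have h : fall (x + n - 1) n = rising x n := by
    unfold fall rising
    rw [← Finset.prod_range_reflect]
    refine Finset.prod_congr rfl fun j hj => ?_
    have hj' : j + 1 ≤ n := Finset.mem_range.mp hj
    rw [Nat.sub_sub, add_comm 1 j, Nat.cast_sub hj']
    push_cast
    ring
  rw [genBinom, h]

/-- On `(0, 1]` the complex beta integrand with real first parameter `p` and second parameter
`n + 1` is the cast of a real function. -/
theorem beta_integrand_eq (p : ℝ) (n : ℕ) {x : ℝ} (hx : 0 < x) :
    (x : ℂ) ^ ((p : ℂ) - 1) * (1 - (x : ℂ)) ^ (((n : ℂ) + 1) - 1) =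
      ((x ^ (p - 1) * (1 - x) ^ n : ℝ) : ℂ) := by
  rw [add_sub_cancel_right, Complex.cpow_natCast]
  push_cast
  rw [Complex.ofReal_cpow hx.le]
  push_cast
  rfl

theorem intervalIntegrable_rpow_mul_one_sub_pow {p : ℝ} (hp : 0 < p) (n : ℕ) :
    IntervalIntegrable (fun x : ℝ => x ^ (p - 1) * (1 - x) ^ n) MeasureTheory.volume 0 1 := by
  refine (intervalIntegral.intervalIntegrable_rpow' (by linarith)).mul_continuousOn ?_
  fun_prop

/-- The beta integral `B(p, n + 1)` for real `p > 0` and natural `n`. -/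
theorem integral_rpow_mul_one_sub_pow {p : ℝ} (hp : 0 < p) (n : ℕ) :
    ∫ x in (0 : ℝ)..1, x ^ (p - 1) * (1 - x) ^ n = n.factorial / rising p (n + 1) := by
  have h := Complex.betaIntegral_eval_nat_add_one_right (u := (p : ℂ)) (by simpa using hp) n
  have h2 : Complex.betaIntegral p (n + 1) =
      ((∫ x in (0 : ℝ)..1, x ^ (p - 1) * (1 - x) ^ n : ℝ) : ℂ) := by
    rw [Complex.betaIntegral, ← intervalIntegral.integral_ofReal]
    refine intervalIntegral.integral_congr_ae (Filter.Eventually.of_forall fun x hx => ?_)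
    rw [Set.uIoc_of_le zero_le_one] at hx
    exact beta_integrand_eq p n hx.1
  rw [h2] at h
  apply Complex.ofReal_injective
  rw [h, rising]
  push_cast
  rfl

/-- The power of the square root in the density is a real power of exponent `a - 1 / 2`; the
factor `x ^ r` shifts the exponent. -/
theorem sqrt_zpow_mul_pow {x : ℝ} (hx : 0 < x) (a r : ℕ) :
    Real.sqrt x ^ (2 * (a : ℤ) - 1) * x ^ r = x ^ (((a : ℝ) + 1 / 2 + r) - 1) := by
  rw [Real.sqrt_eq_rpow, ← Real.rpow_intCast, ← Real.rpow_mul hx.le, ← Real.rpow_natCast x r,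
    ← Real.rpow_add hx]
  congr 1
  push_cast
  ring

/-- The unnormalized moment, as a sum of values of the beta integral. -/
theorem integral_eq_sum (a b k : ℕ) :
    ∫ s in (1 : ℝ)..4,
        Real.sqrt ((s - 1) / 3) ^ (2 * (a : ℤ) - 1) * ((4 - s) / 3) ^ b * s ^ k =
      ∑ r ∈ Finset.range (k + 1), 3 * ((4 : ℝ) ^ r * (k.choose r : ℝ) *
        ((b + (k - r)).factorial / rising ((a : ℝ) + 1 / 2 + r) (b + (k - r) + 1))) := by
  have hsub : ∫ s in (1 : ℝ)..4,
      Real.sqrt ((s - 1) / 3) ^ (2 * (a : ℤ) - 1) * ((4 - s) / 3) ^ b * s ^ k =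
      3 * ∫ x in (0 : ℝ)..1,
        Real.sqrt x ^ (2 * (a : ℤ) - 1) * (1 - x) ^ b * (4 * x + (1 - x)) ^ k := by
    have h := intervalIntegral.integral_comp_div_sub (a := 1) (b := 4) (c := (3 : ℝ))
      (fun x : ℝ => Real.sqrt x ^ (2 * (a : ℤ) - 1) * (1 - x) ^ b * (4 * x + (1 - x)) ^ k)
      (by norm_num) (1 / 3)
    norm_num only [smul_eq_mul] at h
    rw [← h]
    refine intervalIntegral.integral_congr fun s _ => ?_
    congr 3 <;> ring_nf
  have hexp : ∫ x in (0 : ℝ)..1,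
        Real.sqrt x ^ (2 * (a : ℤ) - 1) * (1 - x) ^ b * (4 * x + (1 - x)) ^ k =
      ∫ x in (0 : ℝ)..1, ∑ r ∈ Finset.range (k + 1), (4 : ℝ) ^ r * (k.choose r : ℝ) *
        (x ^ (((a : ℝ) + 1 / 2 + r) - 1) * (1 - x) ^ (b + (k - r))) := by
    refine intervalIntegral.integral_congr_ae (Filter.Eventually.of_forall fun x hx => ?_)
    rw [Set.uIoc_of_le zero_le_one] at hx
    rw [add_pow, Finset.mul_sum]
    refine Finset.sum_congr rfl fun r _ => ?_
    rw [← sqrt_zpow_mul_pow hx.1, mul_pow, pow_add]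
    ring
  rw [hsub, hexp, intervalIntegral.integral_finsetSum, Finset.mul_sum]
  · refine Finset.sum_congr rfl fun r _ => ?_
    rw [intervalIntegral.integral_const_mul, integral_rpow_mul_one_sub_pow (by positivity)]
  · intro r _
    exact (intervalIntegrable_rpow_mul_one_sub_pow (by positivity) _).const_mul _

/-- Equality of the `r`-th terms of the two sides, with `m = k - r`. -/
theorem term_identity (a b r m : ℕ) :
    ((2 * (a : ℝ) + 1) / 6) * genBinom ((a : ℝ) + (b : ℝ) + 1 / 2) b *
        (3 * ((4 : ℝ) ^ r * ((r + m).choose r : ℝ) *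
          ((b + m).factorial / rising ((a : ℝ) + 1 / 2 + r) (b + m + 1)))) =
      4 ^ r * genBinom (-(2 * (a : ℝ) + 1) / 2) r * genBinom (-((b : ℝ) + 1)) m /
        genBinom (-(2 * (a : ℝ) + 2 * (b : ℝ) + 3) / 2) (r + m) := by
  set p : ℝ := (a : ℝ) + 1 / 2 with hp
  have hp0 : 0 < p := by positivity
  have h1 : genBinom ((a : ℝ) + b + 1 / 2) b = rising (p + 1) b / b.factorial := by
    rw [← genBinom_add_sub_one]
    congr 1
    rw [hp]
    ring
  have h2 : genBinom (-(2 * (a : ℝ) + 1) / 2) r = (-1) ^ r * rising p r / r.factorial := by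
    rw [← genBinom_neg]
    congr 1
    rw [hp]
    ring
  have h3 : genBinom (-(2 * (a : ℝ) + 2 * (b : ℝ) + 3) / 2) (r + m) =
      (-1) ^ (r + m) * rising (p + 1 + b) (r + m) / (r + m).factorial := by
    rw [← genBinom_neg]
    congr 1
    rw [hp]
    ring
  have hsplit : rising p r * rising (p + r) (b + m + 1) =
      p * rising (p + 1) b * rising (p + 1 + b) (r + m) := by
    have e1 := rising_add p r (b + m + 1)
    have e2 := rising_add p 1 (b + (r + m))
    rw [rising_one, Nat.cast_one, rising_add (p + 1)] at e2
    rw [← e1, mul_assoc, ← e2]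
    congr 1
    omega
  have hch : ((r + m).choose r : ℝ) = (r + m).factorial / (r.factorial * m.factorial) := by
    rw [Nat.cast_add_choose]
  have ha : (2 * (a : ℝ) + 1) / 6 = p / 3 := by
    rw [hp]
    ring
  have n1 := (rising_pos (x := p + r) (by positivity) (b + m + 1)).ne'
  have n2 := (rising_pos (x := p + 1 + b) (by positivity) (r + m)).ne'
  have n3 : (b.factorial : ℝ) ≠ 0 := by positivity
  have n4 : (r.factorial : ℝ) ≠ 0 := by positivity
  have n5 : (m.factorial : ℝ) ≠ 0 := by positivity
  have n6 : ((r + m).factorial : ℝ) ≠ 0 := by positivity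
  have n7 : (-1 : ℝ) ^ r ≠ 0 := by simp
  have n8 : (-1 : ℝ) ^ m ≠ 0 := by simp
  have hq : rising (p + 1) b * p / rising (p + r) (b + m + 1) =
      rising p r / rising (p + 1 + b) (r + m) := by
    rw [div_eq_div_iff n1 n2]
    linarith
  rw [h1, h2, h3, genBinom_neg, factorial_add_eq_rising b m, hch, ha, pow_add (-1 : ℝ)]
  calc _ = 4 ^ r * (r + m).factorial / (r.factorial * m.factorial) * rising ((b : ℝ) + 1) m *
        (rising (p + 1) b * p / rising (p + r) (b + m + 1)) := by
        field_simp
    _ = _ := by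
        rw [hq]
        field_simp

/-- The `k`-th moments of the probability densities
`((2a+1)/6)·C(a+b+1/2,b)·√((s−1)/3)^{2a−1}((4−s)/3)^b` on `[1,4]`; in particular (`k = 0`)
these densities integrate to `1`. -/
theorem moments_of_CROSS_densities (a b k : ℕ) :
    ((2 * (a : ℝ) + 1) / 6) * genBinom ((a : ℝ) + (b : ℝ) + 1 / 2) b *
        ∫ s in (1 : ℝ)..4,
          Real.sqrt ((s - 1) / 3) ^ (2 * (a : ℤ) - 1) * ((4 - s) / 3) ^ b * s ^ k =
      ∑ r ∈ Finset.range (k + 1),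
        4 ^ r * genBinom (-(2 * (a : ℝ) + 1) / 2) r * genBinom (-((b : ℝ) + 1)) (k - r) /
          genBinom (-(2 * (a : ℝ) + 2 * (b : ℝ) + 3) / 2) k := by
  rw [integral_eq_sum, Finset.mul_sum]
  refine Finset.sum_congr rfl fun r hr => ?_
  obtain ⟨m, rfl⟩ := Nat.exists_eq_add_of_le (Nat.lt_succ_iff.mp (Finset.mem_range.mp hr))
  rw [Nat.add_sub_cancel_left]
  exact term_identity a b r m
end

section
/- Let n ≥ 2 and let V be a 4n-dimensional real inner product space equipped with three linear maps I, J, K : V → V that are isometries satisfying I² = J² = K² = −id and IJ = K (so each of I, J, K is an orthogonal complex structure and they pairwise anticommute). Define the Jacobi operator R(Y,X)X := ⟨X,X⟩Y − ⟨Y,X⟩X + 3(⟨Y,IX⟩ IX + ⟨Y,JX⟩ JX + ⟨Y,KX⟩ KX), which is the Jacobi operator of the symmetric metric on ℍP^n with sectional curvatures in [1,4]. Then for every k ∈ ℕ the Stiefel average of (X,Y) ↦ ⟨R(Y,X)X, Y⟩^k = (1 + 3(⟨Y,IX⟩² + ⟨Y,JX⟩² + ⟨Y,KX⟩²))^k over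 orthonormal pairs equals ∑_{r=0}^k 4^r · C(−3/2, r) · C(−(2n−2), k−r) / C(−(4n−1)/2, k). -/
/-!
For a unit vector `X`, the vectors `a₁ = I X`, `a₂ = J X`, `a₃ = K X` are orthonormal and orthogonal
to `X`, so `q(Y) = ⟪Y, a₁⟫² + ⟪Y, a₂⟫² + ⟪Y, a₃⟫²` is the squared norm of the projection of
`Y ∈ S(Xᗮ)` to a three-dimensional subspace of `Xᗮ`. On the sphere of dimension `4n - 2` this is a
`Beta(3/2, 2n - 2)` variable, that is,
`E[q^r (1 - q)^s] = (3/2)_r (2n - 2)_s / ((4n - 1)/2)_(r + s)` with rising factorials, and the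
formula follows by expanding `(1 + 3q)^k = (4q + (1 - q))^k`. The inner average is therefore
independent of `X` and the outer average is trivial.

The Beta moments are derived from the invariance of the Hausdorff measure under isometries alone
(`plane_identity`): for orthonormal `u, e ∈ Xᗮ` with `u` in the three-dimensional subspace and `e`
orthogonal to it, the rotation-invariance in the plane of `u, e`, differentiated at the function
`⟪u, Y⟫ ⟪e, Y⟫ q^r`, gives `∫ (⟪u, Y⟫² q^r - ⟪e, Y⟫² q^r - 2r ⟪u, Y⟫² ⟪e, Y⟫² q^(r-1)) = 0`. Summing
over an orthonormal basis yields the recursion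
`(4n - 4) ∫ q^(r+1) = (2r + 3) (∫ q^r - ∫ q^(r+1))` (`perp_moment_recursion`), which determines all
moments (`beta_moments`).

For the normalizations to be meaningful the spheres need finite positive Hausdorff measure: finite
by stereographic projection (`hausdorff_sphere_lt_top`), positive by orthogonal projection to a
hyperplane (`hausdorff_sphere_pos`).
-/


open MeasureTheory RealInnerProductSpace
open scoped Real

/-- The Stiefel average of a function `f(X,Y)` of orthonormal pairs in an `m`-dimensional
real inner product space. -/
noncomputable def stiefelAvg {V : Type*} [NormedAddCommGroup V] [InnerProductSpace ℝ V]
    [MeasurableSpace V] [BorelSpace V] (m : ℕ) (f : V → V → ℝ) : ℝ :=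
  ((μH[(m : ℝ) - 1] (Metric.sphere (0 : V) 1)).toReal)⁻¹ *
    ∫ X in Metric.sphere (0 : V) 1,
      (((μH[(m : ℝ) - 2] {Y : V | ‖Y‖ = 1 ∧ ⟪X, Y⟫ = 0}).toReal)⁻¹ *
        ∫ Y in {Y : V | ‖Y‖ = 1 ∧ ⟪X, Y⟫ = 0}, f X Y ∂(μH[(m : ℝ) - 2]))
      ∂(μH[(m : ℝ) - 1])

/-! ### Hausdorff measure of unit spheres -/

open Module Metric in
/-- Two closed hemispheres cover the sphere, and each is a Lipschitz image of a ball of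
dimension `d`. -/
lemma hausdorff_sphere_lt_top {E : Type*} [NormedAddCommGroup E] [InnerProductSpace ℝ E]
    [MeasurableSpace E] [BorelSpace E] [FiniteDimensional ℝ E] (d : ℕ)
    (hd : finrank ℝ E = d + 1) :
    μH[(d : ℝ)] (sphere (0 : E) 1) < ⊤ := by
  have : Fact (finrank ℝ E = d + 1) := ⟨hd⟩
  have : Nontrivial E := Module.nontrivial_of_finrank_pos (R := ℝ) (by omega)
  obtain ⟨v, hv⟩ : ∃ v : E, ‖v‖ = 1 := exists_norm_eq E zero_le_one
  -- a closed hemisphere is the image of the closed ball of radius `2` under stereographic projection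
  have key : ∀ v : E, ‖v‖ = 1 → μH[(d : ℝ)] {x : E | ‖x‖ = 1 ∧ ⟪v, x⟫ ≤ 0} < ⊤ := by
    intro v hv
    have hv0 : v ≠ 0 := by rintro rfl; simp at hv
    have hfr : finrank ℝ (ℝ ∙ v)ᗮ = d := Submodule.finrank_orthogonal_span_singleton hv0
    let φ : (ℝ ∙ v)ᗮ → E := fun w => stereoInvFunAux v (w : E)
    have hφ : ContDiff ℝ 1 φ :=
      contDiff_stereoInvFunAux.comp (ℝ ∙ v)ᗮ.subtypeL.contDiff
    obtain ⟨K, hK⟩ := (hφ.contDiffOn (s := closedBall 0 2)).exists_lipschitzOnWith one_ne_zero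
      (convex_closedBall _ _) (isCompact_closedBall _ _)
    have h1 := hK.hausdorffMeasure_image_le (d := (d : ℝ)) (by positivity)
    have hfin : μH[(d : ℝ)] (closedBall (0 : (ℝ ∙ v)ᗮ) 2) < ⊤ := by
      have := (isCompact_closedBall (0 : (ℝ ∙ v)ᗮ) 2).measure_lt_top
        (μ := μH[(finrank ℝ (ℝ ∙ v)ᗮ : ℝ)])
      rwa [hfr] at this
    have h2 : {x : E | ‖x‖ = 1 ∧ ⟪v, x⟫ ≤ 0} ⊆ φ '' closedBall 0 2 := by
      rintro x ⟨hx, hxv⟩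
      set t : ℝ := ⟪v, x⟫ with ht
      have ht1 : (0:ℝ) < 1 - t := by linarith
      have hw : x - t • v ∈ (ℝ ∙ v)ᗮ := by
        rw [Submodule.mem_orthogonal_singleton_iff_inner_right, inner_sub_right, inner_smul_right,
          real_inner_self_eq_norm_sq, hv]
        simp [ht]
      have hn : ‖x - t • v‖ ^ 2 = 1 - t ^ 2 := by
        rw [norm_sub_sq_real, inner_smul_right, real_inner_comm, norm_smul, hx, hv, ← ht]
        simp
        ring
      have hn2 : ‖(2 / (1 - t)) • (x - t • v)‖ ^ 2 = 4 * (1 + t) / (1 - t) := by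
        rw [norm_smul, mul_pow, hn, Real.norm_eq_abs, sq_abs]
        field_simp
        ring
      refine ⟨(2 / (1 - t)) • ⟨x - t • v, hw⟩, ?_, ?_⟩
      · rw [mem_closedBall_zero_iff, Submodule.coe_norm]
        refine abs_le_of_sq_le_sq' ?_ (by norm_num) |>.2
        simp only [SetLike.mk_smul_mk]
        rw [hn2, div_le_iff₀ ht1]
        nlinarith
      · simp only [φ, SetLike.mk_smul_mk, stereoInvFunAux_apply, hn2]
        have e1 : 4 * (1 + t) / (1 - t) + 4 = 8 / (1 - t) := by field_simp; ring
        have e2 : 4 * (1 + t) / (1 - t) - 4 = 8 * t / (1 - t) := by field_simp; ring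
        rw [e1, e2]
        have : x = (8 / (1 - t))⁻¹ • ((8 / (1 - t)) • x) := by
          rw [smul_smul, inv_mul_cancel₀ (by positivity), one_smul]
        conv_rhs => rw [this]
        congr 1
        rw [smul_smul, smul_sub, smul_smul]
        have e3 : (4 : ℝ) * (2 / (1 - t)) = 8 / (1 - t) := by ring
        have e4 : 8 / (1 - t) * t = 8 * t / (1 - t) := by ring
        rw [e3, e4]
        abel
    refine (measure_mono h2).trans_lt (h1.trans_lt ?_)
    exact ENNReal.mul_lt_top (by simp) hfin
  refine (measure_mono ?_).trans_lt
    ((measure_union_le _ _).trans_lt (ENNReal.add_lt_top.2 ⟨key v hv, key (-v) (by simpa)⟩))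
  intro x hx
  simp only [mem_sphere_zero_iff_norm] at hx
  simp only [Set.mem_union, Set.mem_ofPred_eq, hx, true_and, inner_neg_left]
  rcases le_total ⟪v, x⟫ 0 with h | h
  · exact Or.inl h
  · exact Or.inr (by linarith)

open Module Metric in
/-- The orthogonal projection of the sphere to a hyperplane does not increase Hausdorff measure and
covers the unit ball of the hyperplane. -/
lemma hausdorff_sphere_pos {E : Type*} [NormedAddCommGroup E] [InnerProductSpace ℝ E]
    [MeasurableSpace E] [BorelSpace E] [FiniteDimensional ℝ E] (d : ℕ)
    (hd : finrank ℝ E = d + 1) :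
    0 < μH[(d : ℝ)] (sphere (0 : E) 1) := by
  have : Fact (finrank ℝ E = d + 1) := ⟨hd⟩
  have : Nontrivial E := Module.nontrivial_of_finrank_pos (R := ℝ) (by omega)
  obtain ⟨v, hv⟩ : ∃ v : E, ‖v‖ = 1 := exists_norm_eq E zero_le_one
  have hv0 : v ≠ 0 := by rintro rfl; simp at hv
  have hfr : finrank ℝ (ℝ ∙ v)ᗮ = d := Submodule.finrank_orthogonal_span_singleton hv0
  have hpos : 0 < μH[(d : ℝ)] (ball (0 : (ℝ ∙ v)ᗮ) 1) := by
    have := isOpen_ball.measure_pos (μH[(finrank ℝ (ℝ ∙ v)ᗮ : ℝ)])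
      (nonempty_ball (x := (0 : (ℝ ∙ v)ᗮ)).2 one_pos)
    rwa [hfr] at this
  refine (hpos.trans_le (measure_mono ?_)).trans_le
    (hausdorffMeasure_orthogonalProjectionOnto_le (𝕜 := ℝ) (ℝ ∙ v)ᗮ (d : ℝ) _ (by positivity))
  intro w hw
  rw [mem_ball_zero_iff] at hw
  have hwv : ⟪v, (w : E)⟫ = 0 := Submodule.mem_orthogonal_singleton_iff_inner_right.mp w.2
  have hw2 : ‖(w : E)‖ ^ 2 ≤ 1 := by
    have : ‖(w : E)‖ < 1 := hw
    have := norm_nonneg (w : E)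
    nlinarith
  refine ⟨(w : E) + √(1 - ‖(w : E)‖ ^ 2) • v, ?_, ?_⟩
  · rw [mem_sphere_zero_iff_norm, ← sq_eq_sq₀ (norm_nonneg _) zero_le_one, norm_add_sq_real,
      inner_smul_right, real_inner_comm, hwv, norm_smul, hv, Real.norm_eq_abs, mul_one, sq_abs,
      Real.sq_sqrt (by linarith)]
    ring
  · rw [map_add, map_smul, Submodule.orthogonalProjectionOnto_mem_subspace_eq_self,
      Submodule.orthogonalProjectionOnto_orthogonalComplement_singleton_eq_zero, smul_zero, add_zero]

open Module Metric in
/-- The unit sphere of the hyperplane `Xᗮ`, seen inside `V`, has finite positive measure. -/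
lemma hausdorff_perpSphere {V : Type*} [NormedAddCommGroup V] [InnerProductSpace ℝ V]
    [MeasurableSpace V] [BorelSpace V] [FiniteDimensional ℝ V] (d : ℕ)
    (hd : finrank ℝ V = d + 2) (X : V) (hX : ‖X‖ = 1) :
    0 < μH[(d : ℝ)] {Y : V | ‖Y‖ = 1 ∧ ⟪X, Y⟫ = 0} ∧
      μH[(d : ℝ)] {Y : V | ‖Y‖ = 1 ∧ ⟪X, Y⟫ = 0} < ⊤ := by
  have : Fact (finrank ℝ V = (d + 1) + 1) := ⟨hd⟩
  have hX0 : X ≠ 0 := by rintro rfl; simp at hX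
  have hfr : finrank ℝ (ℝ ∙ X)ᗮ = d + 1 := Submodule.finrank_orthogonal_span_singleton hX0
  have himg : {Y : V | ‖Y‖ = 1 ∧ ⟪X, Y⟫ = 0} =
      ((↑) : (ℝ ∙ X)ᗮ → V) '' sphere (0 : (ℝ ∙ X)ᗮ) 1 := by
    ext Y
    simp only [Set.mem_ofPred_eq, Set.mem_image, mem_sphere_zero_iff_norm]
    constructor
    · rintro ⟨h1, h2⟩
      exact ⟨⟨Y, Submodule.mem_orthogonal_singleton_iff_inner_right.2 h2⟩, h1, rfl⟩
    · rintro ⟨y, hy, rfl⟩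
      exact ⟨hy, Submodule.mem_orthogonal_singleton_iff_inner_right.1 y.2⟩
  rw [himg, Isometry.hausdorffMeasure_image isometry_subtype_coe (Or.inl (by positivity))]
  exact ⟨hausdorff_sphere_pos d hfr, hausdorff_sphere_lt_top d hfr⟩

/-! ### Infinitesimal rotation invariance -/

lemma integrable_of_continuous_unit {V : Type*} [NormedAddCommGroup V] [InnerProductSpace ℝ V]
    [MeasurableSpace V] [BorelSpace V] [FiniteDimensional ℝ V] {ν : Measure V}
    [IsFiniteMeasure ν] (hν : ∀ᵐ x ∂ν, ‖x‖ = 1) {f : V → ℝ} (hf : Continuous f) :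
    Integrable f ν := by
  obtain ⟨C, hC⟩ := (isCompact_sphere (0 : V) 1).exists_bound_of_continuousOn hf.continuousOn
  refine Integrable.of_bound hf.aestronglyMeasurable C ?_
  filter_upwards [hν] with x hx using hC x (by simpa using hx)

/-- Differentiation under the integral sign: if `t ↦ ∫ G t` is constant then `∫ ∂G/∂t = 0`
at `t = 0`. -/
lemma integral_deriv_eq_zero {V : Type*} [NormedAddCommGroup V] [InnerProductSpace ℝ V]
    [MeasurableSpace V] [BorelSpace V] [FiniteDimensional ℝ V] {ν : Measure V}
    [IsFiniteMeasure ν] (hν : ∀ᵐ x ∂ν, ‖x‖ = 1) (G G' : ℝ → V → ℝ)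
    (hG : Continuous fun p : ℝ × V => G p.1 p.2) (hG' : Continuous fun p : ℝ × V => G' p.1 p.2)
    (hder : ∀ t x, HasDerivAt (fun t => G t x) (G' t x) t) (c : ℝ)
    (hc : ∀ t, ∫ x, G t x ∂ν = c) : ∫ x, G' 0 x ∂ν = 0 := by
  have hs1 : ∀ t : ℝ, Continuous (G t) := fun t => hG.comp (Continuous.prodMk_right t)
  have hs2 : ∀ t : ℝ, Continuous (G' t) := fun t => hG'.comp (Continuous.prodMk_right t)
  obtain ⟨C, hC⟩ := ((isCompact_Icc (a := (-1 : ℝ)) (b := 1)).prod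
    (isCompact_sphere (0 : V) 1)).exists_bound_of_continuousOn hG'.continuousOn
  have := (hasDerivAt_integral_of_dominated_loc_of_deriv_le (μ := ν) (F := G) (F' := G')
    (x₀ := (0 : ℝ)) (s := Set.Icc (-1) 1) (bound := fun _ => C)
    (Icc_mem_nhds (by norm_num) (by norm_num))
    (Filter.Eventually.of_forall fun t => (hs1 t).aestronglyMeasurable)
    (integrable_of_continuous_unit hν (hs1 0)) (hs2 0).aestronglyMeasurable
    (by filter_upwards [hν] with x hx t ht using hC (t, x) ⟨ht, by simpa using hx⟩)
    (integrable_const _) (Filter.Eventually.of_forall fun x t _ => hder t x)).2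
  simp only [hc] at this
  exact this.unique (hasDerivAt_const _ _)

lemma reflection_perp_apply {V : Type*} [NormedAddCommGroup V] [InnerProductSpace ℝ V]
    [FiniteDimensional ℝ V] (w x : V) (hw : ‖w‖ = 1) :
    (ℝ ∙ w)ᗮ.reflection x = x - (2 * ⟪w, x⟫) • w := by
  rw [Submodule.reflection_orthogonal_apply, Submodule.reflection_singleton_apply, hw]
  simp [mul_smul, two_smul]

/-- The infinitesimal form of rotation invariance in the plane spanned by `u` and `e`, tested on
the function `⟪u, x⟫ ⟪e, x⟫ Q(x) ^ r`. The invariance is used through the one-parameter family of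
reflections in the vectors `cos t • u + sin t • e`. The hypothesis `hinv` says that, for `x`
varying in directions of this plane, `Q x` depends on `⟪u, x⟫ ^ 2` only, as an additive term. -/
lemma plane_identity {V : Type*} [NormedAddCommGroup V] [InnerProductSpace ℝ V]
    [MeasurableSpace V] [BorelSpace V] [FiniteDimensional ℝ V] {ν : Measure V}
    [IsFiniteMeasure ν] (hν : ∀ᵐ x ∂ν, ‖x‖ = 1) (X : V)
    (hT : ∀ w : V, ‖w‖ = 1 → ⟪X, w⟫ = 0 → MeasurePreserving (ℝ ∙ w)ᗮ.reflection ν ν)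
    (u e : V) (hu : ‖u‖ = 1) (he : ‖e‖ = 1) (hue : ⟪u, e⟫ = 0) (hXu : ⟪X, u⟫ = 0)
    (hXe : ⟪X, e⟫ = 0) (Q : V → ℝ) (hQ : Continuous Q)
    (hinv : ∀ (x : V) (α β : ℝ),
      Q (x + α • u + β • e) - ⟪u, x + α • u + β • e⟫ ^ 2 = Q x - ⟪u, x⟫ ^ 2) (r : ℕ) :
    ∫ x, (⟪u, x⟫ ^ 2 * Q x ^ r - ⟪e, x⟫ ^ 2 * Q x ^ r
      - 2 * r * ⟪u, x⟫ ^ 2 * ⟪e, x⟫ ^ 2 * Q x ^ (r - 1)) ∂ν = 0 := by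
  have huu : ⟪u, u⟫ = (1 : ℝ) := by rw [real_inner_self_eq_norm_sq, hu]; norm_num
  have hee : ⟪e, e⟫ = (1 : ℝ) := by rw [real_inner_self_eq_norm_sq, he]; norm_num
  have heu : ⟪e, u⟫ = (0 : ℝ) := by rw [real_inner_comm, hue]
  -- `L`, `A`, `B` are the coordinates of `x` along the unit vector `cos t • u + sin t • e`, and of
  -- its reflection along `u` and `e`; primes denote derivatives in `t`.
  let L : ℝ → V → ℝ := fun t x => Real.cos t * ⟪u, x⟫ + Real.sin t * ⟪e, x⟫
  let L' : ℝ → V → ℝ := fun t x => -Real.sin t * ⟪u, x⟫ + Real.cos t * ⟪e, x⟫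
  let A : ℝ → V → ℝ := fun t x => ⟪u, x⟫ - 2 * (L t x * Real.cos t)
  let A' : ℝ → V → ℝ := fun t x => -(2 * (L' t x * Real.cos t + L t x * -Real.sin t))
  let B : ℝ → V → ℝ := fun t x => ⟪e, x⟫ - 2 * (L t x * Real.sin t)
  let B' : ℝ → V → ℝ := fun t x => -(2 * (L' t x * Real.sin t + L t x * Real.cos t))
  let R : ℝ → V → ℝ := fun t x => A t x ^ 2 + (Q x - ⟪u, x⟫ ^ 2)
  let G : ℝ → V → ℝ := fun t x => A t x * B t x * R t x ^ r
  let G' : ℝ → V → ℝ := fun t x => (A' t x * B t x + A t x * B' t x) * R t x ^ r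
    + A t x * B t x * (r * R t x ^ (r - 1) * (2 * A t x * A' t x))
  have hL : ∀ t x, HasDerivAt (fun t => L t x) (L' t x) t := fun t x =>
    ((Real.hasDerivAt_cos t).mul_const _).add ((Real.hasDerivAt_sin t).mul_const _)
  have hA : ∀ t x, HasDerivAt (fun t => A t x) (A' t x) t := fun t x =>
    (((hL t x).mul (Real.hasDerivAt_cos t)).const_mul 2).const_sub _
  have hB : ∀ t x, HasDerivAt (fun t => B t x) (B' t x) t := fun t x =>
    (((hL t x).mul (Real.hasDerivAt_sin t)).const_mul 2).const_sub _
  have hR : ∀ t x, HasDerivAt (fun t => R t x) (2 * A t x * A' t x) t := fun t x => by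
    have h := ((hA t x).pow 2).add_const (Q x - ⟪u, x⟫ ^ 2)
    simp only [Nat.cast_ofNat, Nat.add_one_sub_one, pow_one] at h
    exact h
  have hG : ∀ t x, HasDerivAt (fun t => G t x) (G' t x) t := fun t x =>
    ((hA t x).mul (hB t x)).mul ((hR t x).pow r)
  have hcG : Continuous fun p : ℝ × V => G p.1 p.2 := by
    simp only [G, R, A, B, L]; fun_prop
  have hcG' : Continuous fun p : ℝ × V => G' p.1 p.2 := by
    simp only [G', R, A, B, L, A', B', L']; fun_prop
  have hconst : ∀ t, ∫ x, G t x ∂ν = ∫ x, ⟪u, x⟫ * ⟪e, x⟫ * Q x ^ r ∂ν := by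
    intro t
    set w : V := Real.cos t • u + Real.sin t • e with hw
    have hw1 : ‖w‖ = 1 := by
      rw [← sq_eq_sq₀ (norm_nonneg _) zero_le_one, ← real_inner_self_eq_norm_sq, hw]
      simp only [inner_add_left, inner_add_right, inner_smul_left, inner_smul_right, huu, hee, hue,
        heu]
      simp
      nlinarith [Real.sin_sq_add_cos_sq t]
    have hXw : ⟪X, w⟫ = (0 : ℝ) := by
      rw [hw, inner_add_right, inner_smul_right, inner_smul_right, hXu, hXe]; simp
    have hmp := hT w hw1 hXw
    rw [← hmp.integral_comp (ℝ ∙ w)ᗮ.reflection.toHomeomorph.measurableEmbedding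
      fun x => ⟪u, x⟫ * ⟪e, x⟫ * Q x ^ r]
    refine integral_congr_ae (Filter.Eventually.of_forall fun x => ?_)
    have hLx : ⟪w, x⟫ = L t x := by
      simp [hw, L, inner_add_left, inner_smul_left]
    have hrx : (ℝ ∙ w)ᗮ.reflection x =
        x + (-(2 * L t x * Real.cos t)) • u + (-(2 * L t x * Real.sin t)) • e := by
      rw [reflection_perp_apply w x hw1, hLx, hw, smul_add, smul_smul, smul_smul, neg_smul, neg_smul]
      abel
    have h1 : ⟪u, (ℝ ∙ w)ᗮ.reflection x⟫ = A t x := by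
      rw [hrx]
      simp only [inner_add_right, inner_smul_right, huu, hue, A]; ring
    have h2 : ⟪e, (ℝ ∙ w)ᗮ.reflection x⟫ = B t x := by
      rw [hrx]
      simp only [inner_add_right, inner_smul_right, hee, heu, B]; ring
    have h3 : Q ((ℝ ∙ w)ᗮ.reflection x) = R t x := by
      have := hinv x (-(2 * L t x * Real.cos t)) (-(2 * L t x * Real.sin t))
      rw [← hrx, h1] at this
      simp only [R]; linarith
    simp only [G, h1, h2, h3]
  have h0 := integral_deriv_eq_zero hν G G' hcG hcG' hG _ hconst
  have hpt : ∀ x, G' 0 x = 2 * (⟪u, x⟫ ^ 2 * Q x ^ r - ⟪e, x⟫ ^ 2 * Q x ^ r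
      - 2 * r * ⟪u, x⟫ ^ 2 * ⟪e, x⟫ ^ 2 * Q x ^ (r - 1)) := by
    intro x
    have hR0 : R 0 x = Q x := by simp [R, A, L]; ring
    simp only [G', hR0]
    simp [A, A', B, B', L, L']
    ring
  simp only [hpt] at h0
  rw [integral_const_mul] at h0
  linarith

/-! ### Moments of a projection to a three-dimensional subspace -/

lemma fall_succ (x : ℝ) (s : ℕ) : fall x (s + 1) = fall x s * (x - s) := by
  simp [fall, Finset.prod_range_succ]

lemma fall_neg_ne_zero {x : ℝ} (hx : 0 < x) (s : ℕ) : fall (-x) s ≠ 0 := by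
  refine Finset.prod_ne_zero_iff.2 fun j _ => ?_
  have : (0 : ℝ) ≤ j := by positivity
  linarith

/-- Moments of a quantity behaving like a `Beta(3/2, N/2)` variable: the recursion in the exponent
of `q` determines all integrals of `q ^ r * (1 - q) ^ s`. -/
lemma beta_moments (N : ℝ) (hN : 0 < N) (A : ℕ → ℕ → ℝ)
    (h1 : ∀ r, N * A (r + 1) 0 = (2 * r + 3) * (A r 0 - A (r + 1) 0))
    (h2 : ∀ r s, A r (s + 1) = A r s - A (r + 1) s) (r s : ℕ) :
    A r s = A 0 0 * (fall (-(3 / 2)) r * fall (-(N / 2)) s / fall (-((N + 3) / 2)) (r + s)) := by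
  have hne : ∀ s, fall (-((N + 3) / 2)) s ≠ 0 := fun s => fall_neg_ne_zero (by positivity) s
  induction s generalizing r with
  | zero =>
    induction r with
    | zero => simp [fall]
    | succ r ih =>
      have hr : (0 : ℝ) < N + 2 * r + 3 := by positivity
      have hr2 : (-((N + 3) / 2) - (r : ℝ)) ≠ 0 := by
        have : (0 : ℝ) ≤ r := by positivity
        intro h; linarith
      have : A (r + 1) 0 = (2 * r + 3) / (N + 2 * r + 3) * A r 0 := by
        rw [div_mul_eq_mul_div, eq_div_iff hr.ne']
        linarith [h1 r]
      rw [this, ih]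
      simp only [add_zero, fall_succ]
      have := hne r
      field_simp
      rw [eq_div_iff (by intro h; linarith)]
      ring
  | succ s ih =>
    have hrs : (-((N + 3) / 2) - ((r + s : ℕ) : ℝ)) ≠ 0 := by
      have : (0 : ℝ) ≤ ((r + s : ℕ) : ℝ) := by positivity
      intro h; linarith
    rw [h2, ih, ih, show r + 1 + s = (r + s) + 1 by ring, show r + (s + 1) = (r + s) + 1 by ring]
    simp only [fall_succ]
    have := hne (r + s)
    set D := fall (-((N + 3) / 2)) (r + s)
    set c := (-((N + 3) / 2) - ((r + s : ℕ) : ℝ)) with hc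
    have hc' : c = -((N + 3) / 2) - (r + s) := by rw [hc]; push_cast; ring
    rw [← mul_sub, div_sub_div _ _ this (mul_ne_zero this hrs)]
    congr 1
    rw [div_eq_div_iff (mul_ne_zero this (mul_ne_zero this hrs)) (mul_ne_zero this hrs), hc']
    ring

/-- Recursion for the moments of `q`, the squared norm of the projection onto the span of three
orthonormal vectors of `Xᗮ`: sum `plane_identity` over all planes spanned by one of these three
vectors and one of the remaining `N` basis vectors of `Xᗮ`. -/
lemma perp_moment_recursion {V : Type*} [NormedAddCommGroup V] [InnerProductSpace ℝ V]
    [MeasurableSpace V] [BorelSpace V] [FiniteDimensional ℝ V] {ν : Measure V}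
    [IsFiniteMeasure ν] (X : V) (hν : ∀ᵐ x ∂ν, ‖x‖ = 1 ∧ ⟪X, x⟫ = 0)
    (hT : ∀ w : V, ‖w‖ = 1 → ⟪X, w⟫ = 0 → MeasurePreserving (ℝ ∙ w)ᗮ.reflection ν ν)
    (N : ℕ) (b : OrthonormalBasis (Fin 4 ⊕ Fin N) ℝ V) (hX : b (Sum.inl 0) = X)
    (q : V → ℝ) (hq : ∀ x, q x = ∑ i : Fin 3, ⟪b (Sum.inl i.succ), x⟫ ^ 2) (r : ℕ) :
    (N : ℝ) * ∫ x, q x ^ (r + 1) ∂ν =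
      (2 * r + 3) * (∫ x, q x ^ r ∂ν - ∫ x, q x ^ (r + 1) ∂ν) := by
  have hν1 : ∀ᵐ x ∂ν, ‖x‖ = 1 := hν.mono fun x hx => hx.1
  have hqc : Continuous q := by
    rw [show q = fun x => _ from funext hq]; fun_prop
  have hb : ∀ i j, ⟪b i, b j⟫ = if i = j then (1 : ℝ) else 0 :=
    orthonormal_iff_ite.1 b.orthonormal
  have key : ∀ (i : Fin 3) (j : Fin N),
      ∫ x, (⟪b (Sum.inl i.succ), x⟫ ^ 2 * q x ^ r - ⟪b (Sum.inr j), x⟫ ^ 2 * q x ^ r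
      - 2 * r * ⟪b (Sum.inl i.succ), x⟫ ^ 2 * ⟪b (Sum.inr j), x⟫ ^ 2 * q x ^ (r - 1)) ∂ν = 0 := by
    intro i j
    refine plane_identity hν1 X hT _ _ (b.norm_eq_one _) (b.norm_eq_one _) ?_ ?_ ?_ q hqc ?_ r
    · rw [hb]; simp
    · rw [← hX, hb]; simp [(Fin.succ_ne_zero i).symm]
    · rw [← hX, hb]; simp
    · intro x α β
      simp only [hq, inner_add_right, inner_smul_right, hb, Sum.inl.injEq, Fin.succ_inj,
        reduceCtorEq, if_false, if_true, mul_zero, add_zero, mul_one]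
      have hsq : ∀ l : Fin 3, (⟪b (Sum.inl l.succ), x⟫ + α * (if l = i then (1 : ℝ) else 0)) ^ 2 =
          ⟪b (Sum.inl l.succ), x⟫ ^ 2 +
            if l = i then 2 * α * ⟪b (Sum.inl i.succ), x⟫ + α ^ 2 else 0 := by
        intro l
        split_ifs with h
        · subst h; ring
        · ring
      rw [Finset.sum_congr rfl fun l _ => hsq l, Finset.sum_add_distrib, Finset.sum_ite_eq',
        if_pos (Finset.mem_univ _)]
      ring
  have hint : ∀ {f : V → ℝ}, Continuous f → Integrable f ν :=
    fun hf => integrable_of_continuous_unit hν1 hf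
  have hsum : ∫ x, ∑ i : Fin 3, ∑ j : Fin N,
      (⟪b (Sum.inl i.succ), x⟫ ^ 2 * q x ^ r - ⟪b (Sum.inr j), x⟫ ^ 2 * q x ^ r
      - 2 * r * ⟪b (Sum.inl i.succ), x⟫ ^ 2 * ⟪b (Sum.inr j), x⟫ ^ 2 * q x ^ (r - 1)) ∂ν = 0 := by
    rw [integral_finsetSum _ fun i _ => hint (by fun_prop)]
    refine Finset.sum_eq_zero fun i _ => ?_
    rw [integral_finsetSum _ fun j _ => hint (by fun_prop)]
    exact Finset.sum_eq_zero fun j _ => key i j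
  have hpt : ∀ᵐ x ∂ν, ∑ i : Fin 3, ∑ j : Fin N,
      (⟪b (Sum.inl i.succ), x⟫ ^ 2 * q x ^ r - ⟪b (Sum.inr j), x⟫ ^ 2 * q x ^ r
      - 2 * r * ⟪b (Sum.inl i.succ), x⟫ ^ 2 * ⟪b (Sum.inr j), x⟫ ^ 2 * q x ^ (r - 1)) =
      N * q x ^ (r + 1) - (2 * r + 3) * (q x ^ r - q x ^ (r + 1)) := by
    filter_upwards [hν] with x hx
    have hz : ∑ j : Fin N, ⟪b (Sum.inr j), x⟫ ^ 2 = 1 - q x := by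
      have h := b.sum_sq_inner_right x
      rw [Fintype.sum_sum_type, Fin.sum_univ_succ, hX, hx.1, hx.2, ← hq] at h
      linarith
    have hstep : ∀ i : Fin 3, ∑ j : Fin N,
        (⟪b (Sum.inl i.succ), x⟫ ^ 2 * q x ^ r - ⟪b (Sum.inr j), x⟫ ^ 2 * q x ^ r
        - 2 * r * ⟪b (Sum.inl i.succ), x⟫ ^ 2 * ⟪b (Sum.inr j), x⟫ ^ 2 * q x ^ (r - 1)) =
        ⟪b (Sum.inl i.succ), x⟫ ^ 2 * (N * q x ^ r - 2 * r * (1 - q x) * q x ^ (r - 1))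
          - (1 - q x) * q x ^ r := by
      intro i
      rw [Finset.sum_sub_distrib, Finset.sum_sub_distrib, ← Finset.sum_mul, ← Finset.sum_mul,
        ← Finset.sum_mul, ← Finset.mul_sum, hz]
      simp
      ring
    -- at `r = 0` the truncated exponent `r - 1` is harmless because of the factor `r`
    have hr : (r : ℝ) * (q x * q x ^ (r - 1)) = r * q x ^ r := by
      rcases r with _ | r
      · simp
      · simp [pow_succ']
    rw [Finset.sum_congr rfl fun i _ => hstep i, Finset.sum_sub_distrib, ← Finset.sum_mul, ← hq]
    simp only [Finset.sum_const, Finset.card_univ, Fintype.card_fin, nsmul_eq_mul]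
    rw [pow_succ]
    push_cast
    linear_combination (-2 * (1 - q x)) * hr
  rw [integral_congr_ae hpt, integral_sub (hint (by fun_prop)) (hint (by fun_prop)),
    integral_const_mul, integral_const_mul, integral_sub (hint (by fun_prop)) (hint (by fun_prop))]
    at hsum
  linarith

/-- Reflections in hyperplanes containing `X` preserve the Hausdorff measure on the unit sphere of `Xᗮ`. -/
lemma reflection_measurePreserving {V : Type*} [NormedAddCommGroup V] [InnerProductSpace ℝ V]
    [MeasurableSpace V] [BorelSpace V] [FiniteDimensional ℝ V] (d : ℝ) (X w : V)
    (hw : ‖w‖ = 1) (hXw : ⟪X, w⟫ = 0) :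
    MeasurePreserving (ℝ ∙ w)ᗮ.reflection
      ((μH[d] : Measure V).restrict {Y : V | ‖Y‖ = 1 ∧ ⟪X, Y⟫ = 0})
      ((μH[d] : Measure V).restrict {Y : V | ‖Y‖ = 1 ∧ ⟪X, Y⟫ = 0}) := by
  have h := ((ℝ ∙ w)ᗮ.reflection.toIsometryEquiv.measurePreserving_hausdorffMeasure
    d).restrict_preimage_emb
      (ℝ ∙ w)ᗮ.reflection.toHomeomorph.measurableEmbedding {Y : V | ‖Y‖ = 1 ∧ ⟪X, Y⟫ = 0}
  have hpre : (ℝ ∙ w)ᗮ.reflection.toIsometryEquiv ⁻¹' {Y : V | ‖Y‖ = 1 ∧ ⟪X, Y⟫ = 0} =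
      {Y : V | ‖Y‖ = 1 ∧ ⟪X, Y⟫ = 0} := by
    ext Y
    simp only [Set.mem_preimage, LinearIsometryEquiv.coe_toIsometryEquiv, Set.mem_ofPred_eq,
      LinearIsometryEquiv.norm_map]
    rw [reflection_perp_apply w Y hw, inner_sub_right, inner_smul_right, hXw, mul_zero, sub_zero]
  rw [hpre] at h
  exact h

/-! ### The quaternionic frame and the averages -/

/-- The average over the unit sphere of `Xᗮ`. It does not depend on `X`, and the quaternionic
structure enters only through the orthonormality of `X, a₁, a₂, a₃` (with `a₁ = I X`, `a₂ = J X`,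
`a₃ = K X` in the application). -/
lemma inner_average {V : Type*} [NormedAddCommGroup V] [InnerProductSpace ℝ V]
    [MeasurableSpace V] [BorelSpace V] [FiniteDimensional ℝ V] (n : ℕ) (hn : 2 ≤ n)
    (hdim : Module.finrank ℝ V = 4 * n) (X a₁ a₂ a₃ : V)
    (ho : Orthonormal ℝ ![X, a₁, a₂, a₃]) (k : ℕ) :
    ((μH[((4 * n : ℕ) : ℝ) - 2] {Y : V | ‖Y‖ = 1 ∧ ⟪X, Y⟫ = 0}).toReal)⁻¹ *
      ∫ Y in {Y : V | ‖Y‖ = 1 ∧ ⟪X, Y⟫ = 0},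
        (1 + 3 * (⟪Y, a₁⟫ ^ 2 + ⟪Y, a₂⟫ ^ 2 + ⟪Y, a₃⟫ ^ 2)) ^ k ∂(μH[((4 * n : ℕ) : ℝ) - 2]) =
      ∑ r ∈ Finset.range (k + 1),
        4 ^ r * genBinom (-(3 / 2)) r * genBinom (-(2 * (n : ℝ) - 2)) (k - r) /
          genBinom (-(4 * (n : ℝ) - 1) / 2) k := by
  have hX : ‖X‖ = 1 := by simpa using ho.1 0
  have hd : ((4 * n : ℕ) : ℝ) - 2 = ((4 * n - 2 : ℕ) : ℝ) := by
    rw [Nat.cast_sub (by omega)]; norm_num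
  rw [hd]
  obtain ⟨hpos, hfin⟩ := hausdorff_perpSphere (4 * n - 2) (by omega) X hX
  set S : Set V := {Y : V | ‖Y‖ = 1 ∧ ⟪X, Y⟫ = 0} with hS
  have hSm : MeasurableSet S := by
    refine IsClosed.measurableSet ?_
    exact (isClosed_eq continuous_norm continuous_const).inter
      (isClosed_eq (by fun_prop) continuous_const)
  set ν : Measure V := (μH[((4 * n - 2 : ℕ) : ℝ)] : Measure V).restrict S with hνdef
  have : IsFiniteMeasure ν := ⟨by rw [hνdef, Measure.restrict_apply_univ]; exact hfin⟩
  have hν : ∀ᵐ x ∂ν, ‖x‖ = 1 ∧ ⟪X, x⟫ = 0 := ae_restrict_mem hSm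
  have hν1 : ∀ᵐ x ∂ν, ‖x‖ = 1 := hν.mono fun x hx => hx.1
  -- extend the frame to an orthonormal basis indexed by `4 + (4n - 4)` elements; the values of `v`
  -- outside the first block are irrelevant
  let v : Fin 4 ⊕ Fin (4 * n - 4) → V := Sum.elim ![X, a₁, a₂, a₃] fun _ => 0
  have hv : Orthonormal ℝ ((Set.range Sum.inl).domRestrict v) := by
    have := ho.comp (fun i : Set.range (Sum.inl : Fin 4 → Fin 4 ⊕ Fin (4 * n - 4)) =>
      i.2.choose) (fun i j hij => by
        apply Subtype.ext
        rw [← i.2.choose_spec, ← j.2.choose_spec]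
        exact congrArg _ hij)
    convert this using 1
    ext i
    conv_lhs => rw [Set.domRestrict_apply, ← i.2.choose_spec]
    rfl
  obtain ⟨b, hb⟩ := hv.exists_orthonormalBasis_extension_of_card_eq
    (by rw [hdim, Fintype.card_sum, Fintype.card_fin, Fintype.card_fin]; omega)
  have hb' : ∀ i, b (Sum.inl i) = ![X, a₁, a₂, a₃] i := fun i => hb _ ⟨i, rfl⟩
  let q : V → ℝ := fun x => ⟪x, a₁⟫ ^ 2 + ⟪x, a₂⟫ ^ 2 + ⟪x, a₃⟫ ^ 2
  have hqc : Continuous q := by fun_prop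
  have hq : ∀ x, q x = ∑ i : Fin 3, ⟪b (Sum.inl i.succ), x⟫ ^ 2 := by
    intro x
    simp only [hb', Fin.sum_univ_three, q]
    rw [real_inner_comm a₁ x, real_inner_comm a₂ x, real_inner_comm a₃ x]
    rfl
  have hint : ∀ {f : V → ℝ}, Continuous f → Integrable f ν :=
    fun hf => integrable_of_continuous_unit hν1 hf
  have hrec := perp_moment_recursion X hν
    (fun w hw hXw => reflection_measurePreserving _ X w hw hXw) (4 * n - 4) b (hb' 0) q hq
  have hN : (((4 * n - 4 : ℕ) : ℝ)) = 4 * n - 4 := by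
    rw [Nat.cast_sub (by omega)]; push_cast; ring
  have hn' : (2 : ℝ) ≤ n := by exact_mod_cast hn
  have hmom := beta_moments ((4 * n - 4 : ℕ) : ℝ) (by rw [hN]; linarith)
    (fun r s => ∫ x, q x ^ r * (1 - q x) ^ s ∂ν)
    (fun r => by simpa using hrec r)
    (fun r s => by
      rw [← integral_sub (hint (by fun_prop)) (hint (by fun_prop))]
      congr 1; ext x; ring)
  have hmass : ∫ x, q x ^ 0 * (1 - q x) ^ 0 ∂ν = (μH[((4 * n - 2 : ℕ) : ℝ)] S).toReal := by
    simp [hνdef, Measure.real]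
  have hmne : (μH[((4 * n - 2 : ℕ) : ℝ)] S).toReal ≠ 0 :=
    (ENNReal.toReal_pos hpos.ne' hfin.ne).ne'
  simp only [hmass] at hmom
  -- binomial expansion of `1 + 3q = 4q + (1 - q)`
  have hexp : ∀ x, (1 + 3 * (⟪x, a₁⟫ ^ 2 + ⟪x, a₂⟫ ^ 2 + ⟪x, a₃⟫ ^ 2)) ^ k =
      ∑ r ∈ Finset.range (k + 1), (4 ^ r * (k.choose r : ℝ)) * (q x ^ r * (1 - q x) ^ (k - r)) := by
    intro x
    have : 1 + 3 * (⟪x, a₁⟫ ^ 2 + ⟪x, a₂⟫ ^ 2 + ⟪x, a₃⟫ ^ 2) = 4 * q x + (1 - q x) := by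
      simp only [q]; ring
    rw [this, add_pow]
    refine Finset.sum_congr rfl fun r _ => ?_
    rw [mul_pow]; ring
  simp only [hexp]
  rw [integral_finsetSum _ fun r _ => hint (by fun_prop), Finset.mul_sum]
  refine Finset.sum_congr rfl fun r hr => ?_
  have hrk : r ≤ k := Nat.lt_succ_iff.1 (Finset.mem_range.1 hr)
  rw [integral_const_mul, hmom, hN, Nat.add_sub_cancel' hrk]
  rw [show -((4 * (n : ℝ) - 4) / 2) = -(2 * (n : ℝ) - 2) by ring,
    show -((4 * (n : ℝ) - 4 + 3) / 2) = -(4 * (n : ℝ) - 1) / 2 by ring]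
  have hF : fall (-(4 * (n : ℝ) - 1) / 2) k ≠ 0 := by
    rw [neg_div]; exact fall_neg_ne_zero (by linarith) k
  simp only [genBinom]
  rw [Nat.cast_choose ℝ hrk]
  have h1 : (r.factorial : ℝ) ≠ 0 := by positivity
  have h2 : ((k - r).factorial : ℝ) ≠ 0 := by positivity
  have h3 : (k.factorial : ℝ) ≠ 0 := by positivity
  field_simp

/-- A quaternionic structure moves a unit vector `X` to an orthonormal frame. -/
lemma quaternionic_frame {V : Type*} [NormedAddCommGroup V] [InnerProductSpace ℝ V]
    (I J K : V →ₗ[ℝ] V)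
    (hI : ∀ x : V, ‖I x‖ = ‖x‖) (hJ : ∀ x : V, ‖J x‖ = ‖x‖) (hK : ∀ x : V, ‖K x‖ = ‖x‖)
    (hI2 : ∀ x : V, I (I x) = -x) (hJ2 : ∀ x : V, J (J x) = -x)
    (hK2 : ∀ x : V, K (K x) = -x) (hIJK : ∀ x : V, I (J x) = K x) (X : V) (hX : ‖X‖ = 1) :
    Orthonormal ℝ ![X, I X, J X, K X] := by
  -- an isometry squaring to `-1` is skew-symmetric
  have hskew : ∀ T : V →ₗ[ℝ] V, (∀ x, ‖T x‖ = ‖x‖) → (∀ x, T (T x) = -x) →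
      ∀ x, ⟪x, T x⟫ = (0 : ℝ) := by
    intro T hT hT2 x
    have h : ⟪T x, T (T x)⟫ = (⟪x, T x⟫ : ℝ) :=
      (⟨T, hT⟩ : V →ₗᵢ[ℝ] V).inner_map_map x (T x)
    rw [hT2, inner_neg_right, real_inner_comm] at h
    linarith
  have hII : ∀ x y, ⟪I x, I y⟫ = (⟪x, y⟫ : ℝ) := (⟨I, hI⟩ : V →ₗᵢ[ℝ] V).inner_map_map
  have h01 := hskew I hI hI2 X
  have h02 := hskew J hJ hJ2 X
  have h03 := hskew K hK hK2 X
  have h13 : ⟪I X, K X⟫ = (0 : ℝ) := by rw [← hIJK, hII, h02]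
  have h23 : ⟪J X, K X⟫ = (0 : ℝ) := by rw [← hIJK]; exact hskew I hI hI2 (J X)
  have h12 : ⟪I X, J X⟫ = (0 : ℝ) := by
    rw [← hII, hI2, hIJK, inner_neg_left, h03, neg_zero]
  refine ⟨fun i => ?_, fun i j hij => ?_⟩
  · fin_cases i <;> simp [hI, hJ, hK, hX]
  · fin_cases i <;> fin_cases j <;> first | exact absurd rfl hij | skip
    · exact h01
    · exact h02
    · exact h03
    · exact (real_inner_comm _ _).trans h01
    · exact h12
    · exact h13
    · exact (real_inner_comm _ _).trans h02
    · exact (real_inner_comm _ _).trans h12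
    · exact h23
    · exact (real_inner_comm _ _).trans h03
    · exact (real_inner_comm _ _).trans h13
    · exact (real_inner_comm _ _).trans h23

/-- The `k`-th moment of the sectional curvature
`⟨R(Y,X)X,Y⟩ = 1 + 3(⟨Y,IX⟩² + ⟨Y,JX⟩² + ⟨Y,KX⟩²)` of the symmetric metric on `ℍP^n`
with curvatures in `[1,4]`, as a Stiefel average over orthonormal pairs in a
`4n`-dimensional real inner product space carrying a quaternionic structure `I, J, K`. -/
theorem quaternionic_projective_space_moments (n : ℕ) (hn : 2 ≤ n)
    (V : Type*) [NormedAddCommGroup V] [InnerProductSpace ℝ V]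
    [MeasurableSpace V] [BorelSpace V] [FiniteDimensional ℝ V]
    (hdim : Module.finrank ℝ V = 4 * n)
    (I J K : V →ₗ[ℝ] V)
    (hI : ∀ x : V, ‖I x‖ = ‖x‖) (hJ : ∀ x : V, ‖J x‖ = ‖x‖) (hK : ∀ x : V, ‖K x‖ = ‖x‖)
    (hI2 : ∀ x : V, I (I x) = -x) (hJ2 : ∀ x : V, J (J x) = -x)
    (hK2 : ∀ x : V, K (K x) = -x) (hIJK : ∀ x : V, I (J x) = K x) (k : ℕ) :
    stiefelAvg (4 * n)
        (fun X Y : V =>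
          (1 + 3 * (⟪Y, I X⟫ ^ 2 + ⟪Y, J X⟫ ^ 2 + ⟪Y, K X⟫ ^ 2)) ^ k) =
      ∑ r ∈ Finset.range (k + 1),
        4 ^ r * genBinom (-(3 / 2)) r * genBinom (-(2 * (n : ℝ) - 2)) (k - r) /
          genBinom (-(4 * (n : ℝ) - 1) / 2) k := by
  have hd : ((4 * n : ℕ) : ℝ) - 1 = ((4 * n - 1 : ℕ) : ℝ) := by
    rw [Nat.cast_sub (by omega)]; norm_num
  have hpos := hausdorff_sphere_pos (E := V) (4 * n - 1) (by omega)
  have hfin := hausdorff_sphere_lt_top (E := V) (4 * n - 1) (by omega)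
  rw [← hd] at hpos hfin
  unfold stiefelAvg
  rw [setIntegral_congr_fun Metric.isClosed_sphere.measurableSet fun X hX =>
    inner_average n hn hdim X (I X) (J X) (K X)
      (quaternionic_frame I J K hI hJ hK hI2 hJ2 hK2 hIJK X (by simpa using hX)) k]
  rw [setIntegral_const, smul_eq_mul, Measure.real, inv_mul_cancel_left₀]
  exact (ENNReal.toReal_pos hpos.ne' hfin.ne).ne'
end
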